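/- (Elementary form of the main theorem, computing Kostant's coefficient for SU(k)) Let k ≥ 2 and let λ be a partition with at most k parts λ_1 ≥ … ≥ λ_k ≥ 0 and |λ| = kp. Then (−1)^{(k−1)p} · Σ_{μ ⊢ p} (1/z_μ) · χ^λ_{kμ} equals 0 if the numbers λ_i + k − i (1 ≤ i ≤ k) do not have k distinct residues modulo k, and otherwise equals the sign of the unique permutation τ ∈ S_k satisfying λ_{τ(i)} − p + k − τ(i) ≡ k − i (mod k) for all 1 ≤ i ≤ k. In particular this quantity always lies in {0, 1, −1}. -/

import Mathlib

open scoped BigOperators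

namespace RimHookPaper

/-- A partition: a weakly decreasing, eventually-zero sequence of naturals;
`parts n` is the `(n+1)`-st part. -/
structure Partition : Type where
  parts : ℕ → ℕ
  antitone : ∀ ⦃i j : ℕ⦄, i ≤ j → parts j ≤ parts i
  eventually_zero : ∃ N : ℕ, ∀ i : ℕ, N ≤ i → parts i = 0

namespace Partition

/-- The size `|λ|` of a partition. -/
noncomputable def size (P : Partition) : ℕ := ∑ᶠ i, P.parts i

/-- The empty partition. -/
def empty : Partition := ⟨fun _ => 0, fun _ _ _ => le_rfl, ⟨0, fun _ _ => rfl⟩⟩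

/-- The number of nonzero parts of a partition. -/
noncomputable def length (P : Partition) : ℕ := sInf {N | P.parts N = 0}

/-- The cells of the Young diagram of a partition. -/
def cells (P : Partition) : Set (ℕ × ℕ) := {c | c.2 < P.parts c.1}

instance : LE Partition := ⟨fun Q P => ∀ i, Q.parts i ≤ P.parts i⟩

/-- The skew shape `P / Q` (as a set of cells). -/
def skew (P Q : Partition) : Set (ℕ × ℕ) := P.cells \ Q.cells

end Partition

/-- Edge-adjacency of cells. -/
def Adj (c d : ℕ × ℕ) : Prop :=
  (c.1 = d.1 ∧ (c.2 + 1 = d.2 ∨ d.2 + 1 = c.2)) ∨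
    (c.2 = d.2 ∧ (c.1 + 1 = d.1 ∨ d.1 + 1 = c.1))

/-- A set of cells is (edge-)connected. -/
def IsConnectedSet (S : Set (ℕ × ℕ)) : Prop :=
  ∀ c ∈ S, ∀ d ∈ S, Relation.ReflTransGen (fun x y => x ∈ S ∧ y ∈ S ∧ Adj x y) c d

/-- `S` contains no 2×2 square. -/
def NoSquare (S : Set (ℕ × ℕ)) : Prop :=
  ¬ ∃ i j : ℕ, (i, j) ∈ S ∧ (i + 1, j) ∈ S ∧ (i, j + 1) ∈ S ∧ (i + 1, j + 1) ∈ S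

/-- `P / Q` is a rim hook (border strip) of length `t`: a nonempty connected skew
shape with no 2×2 square, consisting of `t` boxes. -/
def IsRimHook (P Q : Partition) (t : ℕ) : Prop :=
  Q ≤ P ∧ (P.skew Q).Nonempty ∧ IsConnectedSet (P.skew Q) ∧ NoSquare (P.skew Q) ∧
    (P.skew Q).ncard = t

/-- One step of a rim hook tableau: an empty hook (`t = 0`) or a rim hook of length `t`. -/
def IsStep (P Q : Partition) (t : ℕ) : Prop :=
  (t = 0 ∧ P = Q) ∨ (0 < t ∧ IsRimHook P Q t)

/-- Number of rows met by a set of cells. -/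
noncomputable def rowCount (S : Set (ℕ × ℕ)) : ℕ := (Prod.fst '' S).ncard

/-- A rim hook tableau of shape `P` and type `μ`: a chain
`∅ = λ⁰ ⊆ λ¹ ⊆ ⋯ ⊆ λʳ = P` with each `λⁱ/λⁱ⁻¹` a (possibly empty)
rim hook of length `μᵢ`. -/
structure RHT (P : Partition) (μ : List ℕ) : Type where
  chain : Fin (μ.length + 1) → Partition
  chain_zero : chain 0 = Partition.empty
  chain_last : chain (Fin.last μ.length) = P
  step : ∀ j : Fin μ.length, IsStep (chain j.succ) (chain j.castSucc) (μ.get j)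

/-- The total height of a rim hook tableau: the sum of the heights
(number of rows minus one) of its nonempty rim hooks. -/
noncomputable def RHT.height {P : Partition} {μ : List ℕ} (T : RHT P μ) : ℕ :=
  ∑ j : Fin μ.length, (rowCount ((T.chain j.succ).skew (T.chain j.castSucc)) - 1)

/-- The character value `χ^λ_μ` of the symmetric group, via the
Murnaghan–Nakayama rule. -/
noncomputable def chiAux (P : Partition) (μ : List ℕ) : ℤ :=
  ∑ᶠ T : RHT P μ, (-1 : ℤ) ^ T.height

/-- The parts of a multiset, listed in weakly decreasing order. -/
def typeList (μ : Multiset ℕ) : List ℕ := (μ.sort (· ≤ ·)).reverse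

/-- `χ^λ_μ` for a multiset type `μ`. -/
noncomputable def chi (P : Partition) (μ : Multiset ℕ) : ℤ := chiAux P (typeList μ)

/-- `z_μ = ∏_j m_j! · j^{m_j}` where `μ` has `m_j` parts equal to `j`. -/
def zpart (μ : Multiset ℕ) : ℕ := μ.prod * ∏ j ∈ μ.toFinset, (μ.count j).factorial

/-- `χ^λ(σ)`: the character evaluated at a permutation, via its full cycle type
(including fixed points as parts equal to 1). -/
noncomputable def chiPerm (P : Partition) {m : ℕ} (σ : Equiv.Perm (Fin m)) : ℤ :=
  chi P (σ.cycleType + Multiset.replicate (m - σ.cycleType.sum) 1)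

/-- Position of the zero (up step) corresponding to row `n` in the 0/1 sequence
`s(P)`, where the median of `s(P)` is the gap just below position `0`. -/
def zpos (P : Partition) (n : ℕ) : ℤ := (P.parts n : ℤ) - (n : ℤ) - 1

/-- `s(P)` has a `0` (an up step) at position `x`; otherwise it has a `1`. -/
def isZeroAt (P : Partition) (x : ℤ) : Prop := ∃ n : ℕ, zpos P n = x

/-- `Q` is the `k`-quotient of `P`: for each residue `i`, the 0/1 sequence of `Q i`
is (up to the shift `d` recording the position of its median) the subsequence of
`s(P)` consisting of every `k`-th digit, including the `(i+1)`-st digit after the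
median of `s(P)`. -/
def IsKQuotient (k : ℕ) (P : Partition) (Q : Fin k → Partition) : Prop :=
  ∀ i : Fin k, ∃ d : ℤ, ∀ j : ℤ,
    isZeroAt (Q i) j ↔ isZeroAt P (((i : ℕ) : ℤ) + (j + d) * (k : ℤ))

/-- `C` is the `k`-core of `P`: it is obtained from `P` by successively removing
rim hooks of length `k`, as long as possible. -/
def IsKCore (k : ℕ) (P C : Partition) : Prop :=
  Relation.ReflTransGen (fun A B => IsRimHook A B k) P C ∧ ¬ ∃ C', IsRimHook C C' k

/-- The map on row indices induced by moving the zero in row `m` down (left)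
to row `m'`, the zeros in rows `m+1,…,m'` each moving up one row. -/
def cycleFun (m m' n : ℕ) : ℕ :=
  if n = m then m' else if m < n ∧ n ≤ m' then n - 1 else n

/-- One tracking step for the zero permutation: passing from `A` to `B` by removing
a rim hook, encoded on the 0/1 sequence as interchanging a `1` with a later `0`
(the moved zero, in row `m` of `A`, jumps over `m' - m` zeros, landing in row `m'`
of `B`); the row of each labeled zero is updated by `cycleFun m m'`. -/
def StepTrack (A B : Partition) (f g : ℕ → ℕ) : Prop :=
  (A = B ∧ g = f) ∨
    ∃ m m' : ℕ, m ≤ m' ∧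
      (∀ n, n < m → zpos B n = zpos A n) ∧
      (∀ n, m ≤ n → n < m' → zpos B n = zpos A (n + 1)) ∧
      (∀ n, m' < n → zpos B n = zpos A n) ∧
      g = fun i => cycleFun m m' (f i)

/-- `π` is the zero permutation of the rim hook tableau `T`: label the zeros of
`s(P)` succeeding the first one by `1,…,ℓ(P)` from left to right (`q j i` is the
row of label `i+1` at stage `j` of the peeling, rows counted from the top), peel
the rim hooks of `T` in order of decreasing entries, and read off the labels in
the final sequence `s(∅)` from left to right. -/
def IsZeroPerm {P : Partition} {μ : List ℕ} (T : RHT P μ)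
    (π : Equiv.Perm (Fin P.length)) : Prop :=
  ∃ q : Fin (μ.length + 1) → ℕ → ℕ,
    (∀ i : ℕ, i < P.length → q (Fin.last μ.length) i = P.length - 1 - i) ∧
    (∀ j : Fin μ.length,
      StepTrack (T.chain j.succ) (T.chain j.castSucc) (q j.succ) (q j.castSucc)) ∧
    (∀ i : Fin P.length, q 0 ((π i : ℕ)) = P.length - 1 - (i : ℕ))

/-- `ω(T) = (T₁,…,T_k)`: the rim hook tableau `T` (all of whose hook lengths are
divisible by `k`) decomposes into the `k`-tuple of rim hook tableaux `Ti` on the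
`k`-quotient: each step of `T`, removing a hook of length `k·t`, affects exactly
one subsequence (mod `k`) of the 0/1 sequence, i.e. removes a hook of length `t`
from exactly one of the quotient partitions. -/
def OmegaRel (k : ℕ) {P : Partition} {κ : List ℕ} (T : RHT P κ)
    {Q : Fin k → Partition} {ν : Fin k → List ℕ}
    (Ti : ∀ i : Fin k, RHT (Q i) (ν i)) : Prop :=
  ∃ (QC : Fin (κ.length + 1) → Fin k → Partition) (a : Fin κ.length → Fin k),
    (∀ j, IsKQuotient k (T.chain j) (QC j)) ∧
    (∀ j : Fin κ.length, ∀ i, i ≠ a j → QC j.castSucc i = QC j.succ i) ∧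
    (∀ j : Fin κ.length, ∃ t : ℕ, κ.get j = k * t ∧
      IsStep (QC j.succ (a j)) (QC j.castSucc (a j)) t) ∧
    (∀ i : Fin k, ∃ e : Fin (ν i).length → Fin κ.length,
      StrictMono e ∧ (∀ s, a (e s) = i) ∧ (∀ j, a j = i → ∃ s, e s = j) ∧
      (∀ s, k * (ν i).get s = κ.get (e s)) ∧
      (Ti i).chain 0 = QC 0 i ∧
      (∀ s : Fin (ν i).length, (Ti i).chain s.succ = QC (Fin.succ (e s)) i))


/-! ### Operators on functions of exponent vectors -/

/-- multiplication by a power sum, on coefficients -/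
def opT {k : ℕ} (t : ℕ) (f : (Fin k → ℤ) → ℚ) : (Fin k → ℤ) → ℚ :=
  fun b => ∑ i, f (b - Pi.single i (t : ℤ))

instance opT_lc {k : ℕ} : LeftCommutative (opT (k := k)) := ⟨by
  intro s t f
  funext b
  unfold opT
  rw [Finset.sum_comm]
  refine Finset.sum_congr rfl fun i _ => Finset.sum_congr rfl fun j _ => ?_
  congr 1
  abel⟩

def delta (k : ℕ) (i : Fin k) : ℤ := (k : ℤ) - 1 - ((i : ℕ) : ℤ)

open Classical in
noncomputable def altA (k : ℕ) (b : Fin k → ℤ) : ℚ :=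
  ∑ σ : Equiv.Perm (Fin k), ((Equiv.Perm.sign σ : ℤ) : ℚ) * if b = delta k ∘ σ then 1 else 0

noncomputable def Fm (k : ℕ) (m : Multiset ℕ) : (Fin k → ℤ) → ℚ :=
  m.foldr opT (altA k)

lemma Fm_cons (k t : ℕ) (m : Multiset ℕ) : Fm k (t ::ₘ m) = opT t (Fm k m) := by
  simp [Fm]

lemma Fm_zero (k : ℕ) : Fm k 0 = altA k := by
  simp [Fm]

lemma altA_anti (k : ℕ) (b : Fin k → ℤ) (π : Equiv.Perm (Fin k)) :
    altA k (b ∘ π) = ((Equiv.Perm.sign π : ℤ) : ℚ) * altA k b := by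
  unfold altA
  rw [Finset.mul_sum]
  refine Fintype.sum_equiv (Equiv.mulRight π⁻¹) _ _ fun σ => ?_
  have h : (b ∘ π = delta k ∘ σ) ↔ (b = delta k ∘ (σ * π⁻¹ : Equiv.Perm (Fin k))) := by
    constructor
    · intro h
      funext i
      have := congrFun h (π⁻¹ i)
      simpa using this
    · intro h
      funext i
      have := congrFun h (π i)
      simpa using this
  have hs : ((Equiv.Perm.sign π : ℤ) : ℚ) * ((Equiv.Perm.sign π : ℤ) : ℚ) = 1 := by
    rcases Int.units_eq_one_or (Equiv.Perm.sign π) with h | h <;> simp [h]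
  have e : Equiv.mulRight π⁻¹ σ = σ * π⁻¹ := rfl
  rw [e]
  simp only [h, Equiv.Perm.sign_mul, Equiv.Perm.sign_inv, Units.val_mul,
    Int.cast_mul]
  by_cases hb : b = delta k ∘ (σ * π⁻¹ : Equiv.Perm (Fin k))
  · rw [if_pos hb]
    linear_combination (-((Equiv.Perm.sign σ : ℤ) : ℚ)) * hs
  · rw [if_neg hb]
    simp

lemma Fm_anti (k : ℕ) (m : Multiset ℕ) : ∀ (b : Fin k → ℤ) (π : Equiv.Perm (Fin k)),
    Fm k m (b ∘ π) = ((Equiv.Perm.sign π : ℤ) : ℚ) * Fm k m b := by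
  induction m using Multiset.induction_on with
  | empty => intro b π; rw [Fm_zero]; exact altA_anti k b π
  | cons t m ih =>
    intro b π
    rw [Fm_cons]
    unfold opT
    rw [Finset.mul_sum]
    refine Fintype.sum_equiv π _ _ fun i => ?_
    rw [← ih]
    congr 1
    funext j
    simp [Pi.single_apply]

lemma Fm_not_inj (k : ℕ) (m : Multiset ℕ) (b : Fin k → ℤ) (hb : ¬ Function.Injective b) :
    Fm k m b = 0 := by
  simp only [Function.Injective, not_forall] at hb
  obtain ⟨i, j, hij, hne⟩ := hb
  have h := Fm_anti k m b (Equiv.swap i j)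
  have h2 : b ∘ Equiv.swap i j = b := by
    funext x
    simp only [Function.comp, Equiv.swap_apply_def]
    split_ifs <;> simp_all
  rw [h2, Equiv.Perm.sign_swap hne] at h
  simp at h
  linarith

lemma Fm_neg (k : ℕ) (m : Multiset ℕ) : ∀ (b : Fin k → ℤ) (i : Fin k), b i < 0 →
    Fm k m b = 0 := by
  induction m using Multiset.induction_on with
  | empty =>
    intro b i hi
    rw [Fm_zero]
    unfold altA
    refine Finset.sum_eq_zero fun σ _ => ?_
    rw [if_neg, mul_zero]
    rintro rfl
    simp only [Function.comp, delta] at hi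
    have := (σ i).2
    omega
  | cons t m ih =>
    intro b i hi
    rw [Fm_cons]
    refine Finset.sum_eq_zero fun j _ => ih _ i ?_
    simp only [Pi.sub_apply, Pi.single_apply]
    split_ifs <;> omega

/-! ### The closed form -/

def Gcond (k p : ℕ) (b : Fin k → ℤ) (σ : Equiv.Perm (Fin k)) : Prop :=
  (∀ i, 0 ≤ b i) ∧ (∑ i, b i = k * p + ∑ i, delta k i) ∧ ∀ i, (k : ℤ) ∣ b i - delta k (σ i)

open Classical in
noncomputable def Gp (k p : ℕ) (b : Fin k → ℤ) : ℚ :=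
  ∑ σ : Equiv.Perm (Fin k), ((Equiv.Perm.sign σ : ℤ) : ℚ) * if Gcond k p b σ then 1 else 0

lemma delta_bd {k : ℕ} (i : Fin k) : 0 ≤ delta k i ∧ delta k i < k := by
  unfold delta
  have := i.2
  omega

lemma Gp_zero (k : ℕ) : Gp k 0 = altA k := by
  funext b
  unfold Gp altA
  refine Finset.sum_congr rfl fun σ _ => ?_
  congr 1
  have : Gcond k 0 b σ ↔ b = delta k ∘ σ := by
    constructor
    · rintro ⟨h0, h1, h2⟩
      have hle : ∀ i, delta k (σ i) ≤ b i := by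
        intro i
        obtain ⟨c, hc⟩ := h2 i
        have h3 := h0 i
        have h4 := delta_bd (σ i)
        have : 0 ≤ c := by
          by_contra hneg
          have : c ≤ -1 := by omega
          nlinarith
        nlinarith
      have hs : ∑ i, delta k (σ i) = ∑ i, b i := by
        rw [h1, Equiv.sum_comp σ (delta k)]; simp
      have := (Finset.sum_eq_sum_iff_of_le (fun i _ => hle i)).1 hs
      funext i
      exact (this i (Finset.mem_univ i)).symm
    · rintro rfl
      refine ⟨fun i => (delta_bd _).1, ?_, fun i => by simp⟩
      simp [Equiv.sum_comp σ (delta k)]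
  simp only [this]

lemma Gp_rec (k p : ℕ) (hk : 0 < k) (b : Fin k → ℤ) :
    (p : ℚ) * Gp k p b = ∑ j ∈ Finset.Icc 1 p, opT (k * j) (Gp k (p - j)) b := by
  classical
  unfold opT Gp
  rw [Finset.mul_sum]
  have : ∀ j ∈ Finset.Icc 1 p, (∑ i : Fin k, ∑ σ : Equiv.Perm (Fin k),
      ((Equiv.Perm.sign σ : ℤ) : ℚ) *
        if Gcond k (p - j) (b - Pi.single i ((k * j : ℕ) : ℤ)) σ then 1 else 0) =
      ∑ σ : Equiv.Perm (Fin k), ∑ i : Fin k, ((Equiv.Perm.sign σ : ℤ) : ℚ) *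
        if Gcond k (p - j) (b - Pi.single i ((k * j : ℕ) : ℤ)) σ then 1 else 0 :=
    fun j _ => Finset.sum_comm
  rw [Finset.sum_congr rfl this, Finset.sum_comm]
  refine Finset.sum_congr rfl fun σ _ => ?_
  simp only [← Finset.mul_sum]
  rw [mul_left_comm]
  congr 1
  have key : ∀ j ∈ Finset.Icc 1 p, ∀ i : Fin k,
      Gcond k (p - j) (b - Pi.single i ((k * j : ℕ) : ℤ)) σ ↔
        Gcond k p b σ ∧ (k * j : ℤ) ≤ b i := by
    intro j hj i
    rw [Finset.mem_Icc] at hj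
    have hsum : ∑ x, (b - Pi.single i ((k * j : ℕ) : ℤ) : Fin k → ℤ) x = ∑ x, b x - k * j := by
      simp [Finset.sum_sub_distrib]
    have hc : ((p - j : ℕ) : ℤ) = p - j := by push_cast [hj.2]; ring
    unfold Gcond
    rw [hsum, hc]
    have hdvd : ∀ x, ((k : ℤ) ∣ (b - Pi.single i ((k * j : ℕ) : ℤ) : Fin k → ℤ) x - delta k (σ x)) ↔
        (k : ℤ) ∣ b x - delta k (σ x) := by
      intro x
      simp only [Pi.sub_apply, Pi.single_apply]
      split_ifs
      · rw [show b x - ((k * j : ℕ) : ℤ) - delta k (σ x) = b x - delta k (σ x) - k * j by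
          push_cast; ring]
        exact dvd_sub_left (dvd_mul_right _ _)
      · simp
    simp only [hdvd]
    constructor
    · rintro ⟨h1, h2, h3⟩
      refine ⟨⟨fun x => ?_, by linarith, h3⟩, ?_⟩
      · have := h1 x
        simp only [Pi.sub_apply, Pi.single_apply] at this
        split_ifs at this <;> omega
      · have := h1 i
        simp at this
        exact this
    · rintro ⟨⟨h1, h2, h3⟩, h4⟩
      refine ⟨fun x => ?_, by linarith, h3⟩
      have := h1 x
      simp only [Pi.sub_apply, Pi.single_apply]
      split_ifs with hx
      · subst hx; push_cast; linarith
      · simpa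
  have e : ∀ j ∈ Finset.Icc 1 p, (∑ i : Fin k,
      if Gcond k (p - j) (b - Pi.single i ((k * j : ℕ) : ℤ)) σ then (1 : ℚ) else 0) =
      ∑ i : Fin k, if Gcond k p b σ ∧ (k * j : ℤ) ≤ b i then 1 else 0 := by
    intro j hj
    refine Finset.sum_congr rfl fun i _ => ?_
    simp only [key j hj i]
  rw [Finset.sum_congr rfl e]
  by_cases hG : Gcond k p b σ
  swap
  · simp [hG]
  simp only [hG, true_and, if_true, mul_one]
  rw [Finset.sum_comm]
  obtain ⟨h1, h2, h3⟩ := hG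
  choose c hc using h3
  have hk' : (0 : ℤ) < k := by exact_mod_cast hk
  have hc0 : ∀ i, 0 ≤ c i := by
    intro i
    have h4 := delta_bd (σ i)
    have := h1 i
    have := hc i
    by_contra hneg
    have : c i ≤ -1 := by omega
    nlinarith
  have hcs : ∑ i, c i = p := by
    have : ∑ i, b i - ∑ i, delta k i = k * ∑ i, c i := by
      rw [← Equiv.sum_comp σ (delta k), ← Finset.sum_sub_distrib, Finset.mul_sum]
      exact Finset.sum_congr rfl fun i _ => hc i
    rw [h2] at this
    have : (k : ℤ) * p = k * ∑ i, c i := by linarith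
    exact (mul_left_cancel₀ hk'.ne' this).symm
  have hcp : ∀ i, c i ≤ p := fun i => by
    rw [← hcs]
    exact Finset.single_le_sum (fun i _ => hc0 i) (Finset.mem_univ i)
  have hi : ∀ i : Fin k, (∑ j ∈ Finset.Icc 1 p, if (k * j : ℤ) ≤ b i then (1 : ℚ) else 0) = c i := by
    intro i
    have h4 := delta_bd (σ i)
    have h5 := hc i
    have hf : ∀ j : ℕ, (k * j : ℤ) ≤ b i ↔ (j : ℤ) ≤ c i := by
      intro j
      constructor
      · intro h
        by_contra hlt
        have : c i + 1 ≤ j := by omega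
        nlinarith
      · intro h
        nlinarith
    rw [Finset.sum_boole]
    have : (Finset.Icc 1 p).filter (fun j : ℕ => (k * j : ℤ) ≤ b i) = Finset.Icc 1 (c i).toNat := by
      ext j
      have := hcp i
      have := hc0 i
      simp only [Finset.mem_filter, Finset.mem_Icc, hf]
      omega
    rw [this]
    simp only [Nat.card_Icc, Nat.add_sub_cancel]
    have := Int.toNat_of_nonneg (hc0 i)
    exact_mod_cast this
  rw [Finset.sum_congr rfl fun i _ => hi i]
  exact_mod_cast hcs.symm

/-! ### Recurrence for the sum over partitions -/

def parF (n : ℕ) : Finset (Multiset ℕ) :=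
  (Finset.univ : Finset (Nat.Partition n)).image Nat.Partition.parts

lemma mem_parF {n : ℕ} {μ : Multiset ℕ} : μ ∈ parF n ↔ (∀ x ∈ μ, 0 < x) ∧ μ.sum = n := by
  unfold parF
  simp only [Finset.mem_image, Finset.mem_univ, true_and]
  constructor
  · rintro ⟨ν, rfl⟩
    exact ⟨fun x hx => ν.parts_pos hx, ν.parts_sum⟩
  · rintro ⟨h1, h2⟩
    exact ⟨⟨μ, fun {x} hx => h1 x hx, h2⟩, rfl⟩

lemma sum_parF (n : ℕ) (f : Multiset ℕ → ℚ) :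
    ∑ μ : Nat.Partition n, f μ.parts = ∑ μ ∈ parF n, f μ := by
  unfold parF
  rw [Finset.sum_image]
  intro a _ b _ h
  exact Nat.Partition.ext h

lemma zpart_cons (j : ℕ) (ν : Multiset ℕ) :
    zpart (j ::ₘ ν) = j * (ν.count j + 1) * zpart ν := by
  classical
  unfold zpart
  have h1 : ∏ x ∈ (j ::ₘ ν).toFinset, ((j ::ₘ ν).count x).factorial =
      (ν.count j + 1) * ∏ x ∈ ν.toFinset, (ν.count x).factorial := by
    have h2 : ∏ x ∈ ν.toFinset, (ν.count x).factorial =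
        ∏ x ∈ (j ::ₘ ν).toFinset, (ν.count x).factorial := by
      refine Finset.prod_subset (by simp [Finset.subset_iff]; tauto) ?_
      intro x _ hx
      rw [Multiset.mem_toFinset] at hx
      rw [Multiset.count_eq_zero.2 hx]
      rfl
    have hj : j ∈ (j ::ₘ ν).toFinset := by simp
    rw [h2, ← Finset.mul_prod_erase _ _ hj, ← Finset.mul_prod_erase _ (fun x => (ν.count x).factorial) hj,
      Multiset.count_cons_self, Nat.factorial_succ, mul_assoc]
    congr 2
    refine Finset.prod_congr rfl fun x hx => ?_
    rw [Multiset.count_cons_of_ne (Finset.ne_of_mem_erase hx)]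
  rw [h1, Multiset.prod_cons]
  ring

lemma zpart_ne_zero {μ : Multiset ℕ} (h : ∀ x ∈ μ, 0 < x) : (zpart μ : ℚ) ≠ 0 := by
  have : 0 < zpart μ := by
    unfold zpart
    refine Nat.mul_pos ?_ (Finset.prod_pos fun x _ => Nat.factorial_pos _)
    rw [Nat.pos_iff_ne_zero, Ne, Multiset.prod_eq_zero_iff]
    intro h0
    exact lt_irrefl _ (h 0 h0)
  exact_mod_cast this.ne'

lemma Z_rec (n : ℕ) (f : Multiset ℕ → ℚ) :
    (n : ℚ) * ∑ μ ∈ parF n, 1 / (zpart μ : ℚ) * f μ =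
      ∑ j ∈ Finset.Icc 1 n, ∑ ν ∈ parF (n - j), 1 / (zpart ν : ℚ) * f (j ::ₘ ν) := by
  classical
  have h1 : ∀ μ ∈ parF n, (n : ℚ) * (1 / (zpart μ : ℚ) * f μ) =
      ∑ j ∈ μ.toFinset, ((j * μ.count j : ℕ) : ℚ) * (1 / (zpart μ : ℚ) * f μ) := by
    intro μ hμ
    rw [← Finset.sum_mul]
    congr 1
    rw [mem_parF] at hμ
    rw [← hμ.2, Finset.sum_multiset_count, Nat.cast_sum]
    refine Finset.sum_congr rfl fun j _ => ?_
    simp [mul_comm]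
  rw [Finset.mul_sum, Finset.sum_congr rfl h1, Finset.sum_sigma', Finset.sum_sigma']
  refine Finset.sum_bij' (fun x _ => ⟨x.2, x.1.erase x.2⟩) (fun y _ => ⟨y.1 ::ₘ y.2, y.1⟩)
    ?_ ?_ ?_ ?_ ?_
  · rintro ⟨μ, j⟩ h
    simp only [Finset.mem_sigma, Multiset.mem_toFinset, mem_parF, Finset.mem_Icc] at h ⊢
    obtain ⟨⟨h1, h2⟩, h3⟩ := h
    have h4 := Multiset.cons_erase h3
    have h5 : j + (μ.erase j).sum = n := by rw [← Multiset.sum_cons, h4, h2]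
    exact ⟨⟨h1 j h3, by omega⟩, fun x hx => h1 x (Multiset.mem_of_mem_erase hx), by omega⟩
  · rintro ⟨j, ν⟩ h
    simp only [Finset.mem_sigma, Multiset.mem_toFinset, mem_parF, Finset.mem_Icc] at h ⊢
    obtain ⟨⟨h1, h2⟩, h3, h4⟩ := h
    refine ⟨⟨?_, by rw [Multiset.sum_cons]; omega⟩, by simp⟩
    intro x hx
    rcases Multiset.mem_cons.1 hx with rfl | hx
    · omega
    · exact h3 x hx
  · rintro ⟨μ, j⟩ h
    simp only [Finset.mem_sigma, Multiset.mem_toFinset] at h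
    simp [Multiset.cons_erase h.2]
  · rintro ⟨j, ν⟩ h
    simp
  · rintro ⟨μ, j⟩ h
    simp only [Finset.mem_sigma, Multiset.mem_toFinset, mem_parF] at h
    obtain ⟨⟨h1, h2⟩, h3⟩ := h
    have h4 := Multiset.cons_erase h3
    have hz : zpart μ = j * μ.count j * zpart (μ.erase j) := by
      have := zpart_cons j (μ.erase j)
      rw [h4, Multiset.count_erase_self] at this
      rw [this, Nat.sub_add_cancel (Multiset.count_pos.2 h3)]
    have hz0 : (zpart μ : ℚ) ≠ 0 := zpart_ne_zero h1
    have hz1 : (zpart (μ.erase j) : ℚ) ≠ 0 :=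
      zpart_ne_zero fun x hx => h1 x (Multiset.mem_of_mem_erase hx)
    simp only [h4]
    have hz' : (zpart μ : ℚ) = ((j * μ.count j : ℕ) : ℚ) * zpart (μ.erase j) := by
      rw [hz]; push_cast; ring
    have : ((j * μ.count j : ℕ) : ℚ) ≠ 0 := by
      intro h0
      rw [h0, zero_mul] at hz'
      exact hz0 hz'
    rw [hz']
    field_simp

lemma Z_eq (k : ℕ) (hk : 0 < k) : ∀ (n : ℕ) (b : Fin k → ℤ),
    ∑ μ ∈ parF n, 1 / (zpart μ : ℚ) * Fm k (μ.map fun x => k * x) b = Gp k n b := by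
  intro n
  induction n using Nat.strong_induction_on with
  | _ n ih =>
    intro b
    rcases Nat.eq_zero_or_pos n with rfl | hn
    · have : parF 0 = {0} := by
        ext μ
        rw [mem_parF, Finset.mem_singleton]
        constructor
        · rintro ⟨h1, h2⟩
          refine Multiset.eq_zero_of_forall_notMem fun x hx => ?_
          have := h1 x hx
          have := Multiset.le_sum_of_mem hx
          omega
        · rintro rfl
          simp
      rw [this, Gp_zero]
      simp [zpart, Fm_zero]
    · have hn' : (n : ℚ) ≠ 0 := by exact_mod_cast hn.ne'
      apply mul_left_cancel₀ hn'
      rw [Gp_rec k n hk, Z_rec]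
      refine Finset.sum_congr rfl fun j hj => ?_
      rw [Finset.mem_Icc] at hj
      have hG : Gp k (n - j) = fun b => ∑ μ ∈ parF (n - j),
          1 / (zpart μ : ℚ) * Fm k (μ.map fun x => k * x) b := by
        funext b
        exact (ih (n - j) (by omega) b).symm
      rw [hG]
      simp only [Multiset.map_cons, Fm_cons, opT, Finset.mul_sum]
      rw [Finset.sum_comm]

/-! ### Rim hooks and beta numbers -/

def beta (k : ℕ) (P : Partition) (i : Fin k) : ℤ :=
  (P.parts (i : ℕ) : ℤ) + (k : ℤ) - 1 - ((i : ℕ) : ℤ)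

structure HookData (P Q : Partition) (i j t : ℕ) : Prop where
  hij : i ≤ j
  lo : ∀ r, r < i → Q.parts r = P.parts r
  hi : ∀ r, j < r → Q.parts r = P.parts r
  mid : ∀ r, i ≤ r → r < j → Q.parts r + 1 = P.parts (r + 1)
  last : Q.parts j + t + i = P.parts i + j
  lt : Q.parts j < P.parts j

lemma partition_ext {P Q : Partition} (h : ∀ i, P.parts i = Q.parts i) : P = Q := by
  cases P; cases Q
  congr
  funext i
  exact h i

lemma mem_skew {P Q : Partition} {r y : ℕ} :
    (r, y) ∈ P.skew Q ↔ Q.parts r ≤ y ∧ y < P.parts r := by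
  unfold Partition.skew Partition.cells
  simp only [Set.mem_sdiff, Set.mem_ofPred_eq, not_lt]
  tauto

lemma skew_ncard (k : ℕ) {P Q : Partition} (hQ : ∀ i, Q.parts i ≤ P.parts i)
    (hP : ∀ i, k ≤ i → P.parts i = 0) :
    ((P.skew Q).ncard : ℤ) = ∑ i, beta k P i - ∑ i, beta k Q i := by
  have h : P.skew Q = ↑(((Finset.range k).sigma fun r => Finset.Ico (Q.parts r) (P.parts r)).map
      (Equiv.sigmaEquivProd ℕ ℕ).toEmbedding) := by
    ext ⟨r, y⟩
    rw [mem_skew]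
    simp only [Finset.coe_map, Set.mem_image, Finset.mem_coe, Finset.mem_sigma, Finset.mem_range,
      Finset.mem_Ico, Sigma.exists, Equiv.coe_toEmbedding, Equiv.sigmaEquivProd_apply,
      Prod.mk.injEq]
    constructor
    · rintro ⟨h1, h2⟩
      refine ⟨r, y, ⟨?_, h1, h2⟩, rfl, rfl⟩
      by_contra hr
      have := hP r (by omega)
      omega
    · rintro ⟨r', y', ⟨_, h1, h2⟩, rfl, rfl⟩
      exact ⟨h1, h2⟩
  rw [h, Set.ncard_coe_finset, Finset.card_map, Finset.card_sigma, ← Finset.sum_sub_distrib,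
    Finset.sum_range]
  push_cast
  refine Finset.sum_congr rfl fun i _ => ?_
  have := hQ i
  simp only [Nat.card_Ico, beta]
  omega

lemma HookData.le {P Q : Partition} {i j t : ℕ} (h : HookData P Q i j t) (r : ℕ) :
    Q.parts r ≤ P.parts r := by
  rcases lt_or_ge r i with h1 | h1
  · exact (h.lo r h1).le
  rcases lt_trichotomy r j with h2 | rfl | h2
  · have := h.mid r h1 h2
    have := P.antitone (Nat.le_succ r)
    simp only [Nat.succ_eq_add_one] at this
    omega
  · exact h.lt.le
  · exact (h.hi r h2).le

lemma HookData.lt' {P Q : Partition} {i j t : ℕ} (h : HookData P Q i j t) (r : ℕ) :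
    Q.parts r < P.parts r ↔ i ≤ r ∧ r ≤ j := by
  constructor
  · intro hr
    constructor
    · by_contra h1
      have := h.lo r (by omega)
      omega
    · by_contra h1
      have := h.hi r (by omega)
      omega
  · rintro ⟨h1, h2⟩
    rcases h2.lt_or_eq with h2 | rfl
    · have := h.mid r h1 h2
      have := P.antitone (Nat.le_succ r)
      simp only [Nat.succ_eq_add_one] at this
      omega
    · exact h.lt

lemma HookData.rowCount {P Q : Partition} {i j t : ℕ} (h : HookData P Q i j t) :
    rowCount (P.skew Q) - 1 = j - i := by
  have : Prod.fst '' (P.skew Q) = Set.Icc i j := by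
    ext r
    simp only [Set.mem_image, Prod.exists, exists_and_right, exists_eq_right, mem_skew,
      Set.mem_Icc, ← h.lt']
    constructor
    · rintro ⟨y, h1, h2⟩
      omega
    · intro h1
      exact ⟨_, le_rfl, h1⟩
  unfold RimHookPaper.rowCount
  rw [this, ← Finset.coe_Icc, Set.ncard_coe_finset, Nat.card_Icc]
  omega

lemma HookData.beta_eq {k : ℕ} {P Q : Partition} {t : ℕ} {i j : Fin k}
    (h : HookData P Q i j t) :
    beta k Q = (beta k P - Pi.single i (t : ℤ)) ∘ Fin.cycleIcc i j := by
  have hij : i ≤ j := h.hij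
  obtain ⟨n, rfl⟩ : ∃ n, k = n + 1 := ⟨k - 1, by have := i.2; omega⟩
  funext r
  simp only [Function.comp, Pi.sub_apply]
  rcases lt_or_ge r i with h1 | h1
  · rw [Fin.cycleIcc_of_lt h1, Pi.single_eq_of_ne h1.ne]
    simp [beta, h.lo r h1]
  rcases lt_trichotomy r j with h2 | rfl | h2
  · rw [Fin.cycleIcc_of_ge_of_lt h1 h2]
    have hv : ((r + 1 : Fin (n + 1)) : ℕ) = r + 1 :=
      Fin.val_add_one_of_lt (lt_of_lt_of_le h2 (Fin.le_last j))
    have hne : r + 1 ≠ i := by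
      intro he
      rw [Fin.ext_iff, hv] at he
      have : (i : ℕ) ≤ r := h1
      omega
    rw [Pi.single_eq_of_ne hne]
    have := h.mid r h1 h2
    simp only [beta, hv]
    omega
  · rw [Fin.cycleIcc_of_last hij, Pi.single_eq_same]
    have := h.last
    simp only [beta]
    omega
  · rw [Fin.cycleIcc_of_gt h2, Pi.single_eq_of_ne (lt_of_le_of_lt hij h2).ne']
    simp [beta, h.hi r h2]

lemma HookData.sum_eq {k : ℕ} {P Q : Partition} {t : ℕ} {i j : Fin k}
    (h : HookData P Q i j t) : ∑ r, beta k Q r = ∑ r, beta k P r - t := by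
  rw [h.beta_eq]
  have := Equiv.sum_comp (Fin.cycleIcc i j) (beta k P - Pi.single i (t : ℤ))
  simp only [Function.comp] 
  rw [this]
  simp [Finset.sum_sub_distrib]

lemma rim_of_hook {k : ℕ} {P Q : Partition} {t : ℕ} {i j : Fin k}
    (hP : ∀ i, k ≤ i → P.parts i = 0) (h : HookData P Q i j t) : IsRimHook P Q t := by
  refine ⟨h.le, ⟨(j, Q.parts j), mem_skew.2 ⟨le_rfl, h.lt⟩⟩, ?_, ?_, ?_⟩
  · set R : ℕ × ℕ → ℕ × ℕ → Prop :=
      fun x y => x ∈ P.skew Q ∧ y ∈ P.skew Q ∧ Adj x y with hR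
    have hsymm : Std.Symm R := ⟨by
      rintro x y ⟨h1, h2, h3⟩
      refine ⟨h2, h1, ?_⟩
      unfold Adj at *
      omega⟩
    have left : ∀ (d r : ℕ), Q.parts r + d < P.parts r →
        Relation.ReflTransGen R (r, Q.parts r + d) (r, Q.parts r) := by
      intro d r
      induction d with
      | zero => intro _; exact Relation.ReflTransGen.refl
      | succ d ih =>
        intro hd
        refine Relation.ReflTransGen.head ⟨mem_skew.2 ⟨by omega, hd⟩,
          mem_skew.2 ⟨?_, ?_⟩, ?_⟩ (ih (by omega))
        · omega
        · omega
        · left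
          simp only [true_and]
          omega
    have main : ∀ (e r y : ℕ), r + e = j → (r, y) ∈ P.skew Q →
        Relation.ReflTransGen R (r, y) ((j : ℕ), Q.parts j) := by
      intro e
      induction e with
      | zero =>
        intro r y hr hm
        rw [mem_skew] at hm
        have hr : r = j := by omega
        have := left (y - Q.parts r) r (by omega)
        rw [Nat.add_sub_cancel' hm.1] at this
        rw [hr] at this ⊢
        exact this
      | succ e ih =>
        intro r y hr hm
        rw [mem_skew] at hm
        have h1 := left (y - Q.parts r) r (by omega)
        rw [Nat.add_sub_cancel' hm.1] at h1
        have hir : (i : ℕ) ≤ r := ((h.lt' r).1 (by omega)).1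
        have hmid := h.mid r hir (by omega)
        have hmem : (r + 1, Q.parts r) ∈ P.skew Q := by
          rw [mem_skew]
          have := Q.antitone (Nat.le_succ r)
          simp only [Nat.succ_eq_add_one] at this
          omega
        refine h1.trans (Relation.ReflTransGen.head ⟨mem_skew.2 ⟨le_rfl, by omega⟩, hmem, ?_⟩
          (ih (r + 1) (Q.parts r) (by omega) hmem))
        right
        simp
    have main' : ∀ c ∈ P.skew Q, Relation.ReflTransGen R c ((j : ℕ), Q.parts j) := by
      rintro ⟨r, y⟩ hm
      have hm' := mem_skew.1 hm
      have := ((h.lt' r).1 (by omega)).2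
      exact main (j - r) r y (by omega) hm
    intro c hc d hd
    exact (main' c hc).trans (Std.Symm.symm _ _ (main' d hd))
  · rintro ⟨r, y, h1, h2, h3, h4⟩
    rw [mem_skew] at h1 h2 h3 h4
    have ha := (h.lt' r).1 (by omega)
    have hb := (h.lt' (r + 1)).1 (by omega)
    have := h.mid r ha.1 (by omega)
    omega
  · have h1 := skew_ncard k h.le hP
    rw [h.sum_eq] at h1
    have : ((P.skew Q).ncard : ℤ) = t := by linarith
    exact_mod_cast this

lemma crossing {S : Set (ℕ × ℕ)} {c d : ℕ × ℕ}
    (h : Relation.ReflTransGen (fun x y => x ∈ S ∧ y ∈ S ∧ Adj x y) c d) (r : ℕ)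
    (hc : c.1 ≤ r) (hd : r < d.1) : ∃ y, (r, y) ∈ S ∧ (r + 1, y) ∈ S := by
  induction h with
  | refl => omega
  | @tail x z _ hxz ih =>
    by_cases hx : r < x.1
    · exact ih hx
    · obtain ⟨h1, h2, h3⟩ := hxz
      obtain ⟨x1, x2⟩ := x
      obtain ⟨z1, z2⟩ := z
      simp only [Adj] at h3 hx hd
      have e1 : x1 = r := by omega
      have e2 : z1 = r + 1 := by omega
      have e3 : x2 = z2 := by omega
      subst e1 e2 e3
      exact ⟨x2, h1, h2⟩

lemma hook_of_rim {k : ℕ} {P Q : Partition} {t : ℕ}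
    (hP : ∀ i, k ≤ i → P.parts i = 0) (h : IsRimHook P Q t) :
    ∃ i j : Fin k, HookData P Q i j t := by
  obtain ⟨hle, hne, hconn, hsq, hcard⟩ := h
  set R : Finset ℕ := (Finset.range k).filter fun r => Q.parts r < P.parts r with hR
  have hmem : ∀ r, r ∈ R ↔ Q.parts r < P.parts r := by
    intro r
    simp only [hR, Finset.mem_filter, Finset.mem_range, and_iff_right_iff_imp]
    intro h
    by_contra hr
    have := hP r (by omega)
    omega
  have hRne : R.Nonempty := by
    obtain ⟨⟨r, y⟩, hm⟩ := hne
    rw [mem_skew] at hm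
    exact ⟨r, (hmem r).2 (by omega)⟩
  have hi := R.min'_mem hRne
  have hj := R.max'_mem hRne
  set i := R.min' hRne
  set j := R.max' hRne
  have hlt : ∀ r, Q.parts r < P.parts r → i ≤ r ∧ r ≤ j := fun r hr =>
    ⟨R.min'_le r ((hmem r).2 hr), R.le_max' r ((hmem r).2 hr)⟩
  have hik : i < k := Finset.mem_range.1 (Finset.mem_filter.1 hi).1
  have hjk : j < k := Finset.mem_range.1 (Finset.mem_filter.1 hj).1
  rw [hmem] at hi hj
  have mid : ∀ r, i ≤ r → r < j → Q.parts r + 1 = P.parts (r + 1) := by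
    intro r h1 h2
    have hp := hconn (i, Q.parts i) (mem_skew.2 ⟨le_rfl, hi⟩) (j, Q.parts j)
      (mem_skew.2 ⟨le_rfl, hj⟩)
    obtain ⟨y, ha, hb⟩ := crossing hp r h1 h2
    rw [mem_skew] at ha hb
    by_contra hne
    apply hsq
    have hq := Q.antitone (Nat.le_succ r)
    have hp := P.antitone (Nat.le_succ r)
    simp only [Nat.succ_eq_add_one] at hq hp
    refine ⟨r, Q.parts r, ?_, ?_, ?_, ?_⟩ <;> rw [mem_skew] <;> omega
  have hij : i ≤ j := (hlt i hi).2
  have hQj : Q.parts j + i ≤ P.parts i + j := by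
    have := P.antitone hij
    omega
  have hd : HookData P Q i j (P.parts i + j - i - Q.parts j) := by
    refine ⟨hij, fun r hr => ?_, fun r hr => ?_, mid, by omega, hj⟩
    · by_contra hne
      have h1 : Q.parts r ≤ P.parts r := hle r
      have := hlt r (by omega)
      omega
    · by_contra hne
      have h1 : Q.parts r ≤ P.parts r := hle r
      have := hlt r (by omega)
      omega
  have hd' : HookData P Q (⟨i, hik⟩ : Fin k) (⟨j, hjk⟩ : Fin k) (P.parts i + j - i - Q.parts j) := hd
  have hs := hd'.sum_eq
  have hn := skew_ncard k hle hP
  rw [hs, hcard] at hn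
  have : t = P.parts i + j - i - Q.parts j := by
    have : (t : ℤ) = ((P.parts i + j - i - Q.parts j : ℕ) : ℤ) := by linarith
    exact_mod_cast this
  rw [← this] at hd'
  exact ⟨_, _, hd'⟩

lemma beta_strictAnti (k : ℕ) (P : Partition) : StrictAnti (beta k P) := by
  intro i j hij
  have := P.antitone (le_of_lt hij : (i : ℕ) ≤ j)
  have : (i : ℕ) < j := hij
  simp only [beta]
  omega

lemma beta_inj {k : ℕ} {P Q : Partition} (hP : ∀ i, k ≤ i → P.parts i = 0)
    (hQ : ∀ i, k ≤ i → Q.parts i = 0) (h : beta k P = beta k Q) : P = Q := by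
  apply partition_ext
  intro i
  by_cases hi : i < k
  · have := congrFun h ⟨i, hi⟩
    simp only [beta] at this
    omega
  · rw [hP i (by omega), hQ i (by omega)]

lemma hook_unique {k : ℕ} {P Q Q' : Partition} {t : ℕ} {i j j' : Fin k}
    (hP : ∀ i, k ≤ i → P.parts i = 0)
    (h : HookData P Q i j t) (h' : HookData P Q' i j' t) : Q = Q' := by
  have hz : ∀ {Q j}, HookData P Q i j t → ∀ r, k ≤ r → Q.parts r = 0 := by
    intro Q j h r hr
    have := h.le r
    have := hP r hr
    omega
  refine beta_inj (hz h) (hz h') ?_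
  refine ((beta_strictAnti k Q).range_inj (beta_strictAnti k Q')).1 ?_
  rw [h.beta_eq, h'.beta_eq, (Fin.cycleIcc i j).surjective.range_comp,
    (Fin.cycleIcc i j').surjective.range_comp]

lemma hook_exists {k : ℕ} {P : Partition} {t : ℕ} (ht : 0 < t) {i : Fin k}
    (hP : ∀ i, k ≤ i → P.parts i = 0)
    (hinj : Function.Injective (beta k P - Pi.single i (t : ℤ)))
    (hnn : ∀ r, 0 ≤ (beta k P - Pi.single i (t : ℤ) : Fin k → ℤ) r) :
    ∃ (Q : Partition) (j : Fin k), HookData P Q i j t := by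
  classical
  have hbi : 0 ≤ beta k P i - t := by simpa using hnn i
  set R : Finset (Fin k) := Finset.univ.filter fun r => beta k P i - t < beta k P r with hR
  have hiR : i ∈ R := by simp [hR, ht]
  have hRne : R.Nonempty := ⟨i, hiR⟩
  have hj := R.max'_mem hRne
  have hij := R.le_max' i hiR
  have hmax : ∀ r, R.max' hRne < r → beta k P r ≤ beta k P i - t := by
    intro r hr
    by_contra hlt
    have := R.le_max' r (by simp only [hR, Finset.mem_filter, Finset.mem_univ, true_and]; omega)
    exact absurd hr (not_lt.2 this)
  generalize R.max' hRne = j at hj hij hmax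
  simp only [hR, Finset.mem_filter, Finset.mem_univ, true_and] at hj
  have hij' : (i : ℕ) ≤ j := hij
  have hjk := j.2
  have hj1 : P.parts i + j < P.parts j + i + t := by
    simp only [beta] at hj; omega
  -- next part
  have hnext : P.parts (j + 1) + i + t ≤ P.parts i + j := by
    by_cases hk : (j : ℕ) + 1 < k
    · have h1 := hmax ⟨j + 1, hk⟩ (by rw [Fin.lt_def]; simp)
      have h2 : beta k P ⟨j + 1, hk⟩ ≠ beta k P i - t := by
        intro he
        have hne : (⟨j + 1, hk⟩ : Fin k) ≠ i := by
          intro he; rw [Fin.ext_iff] at he; simp only at he; omega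
        apply hne
        apply hinj
        simp only [Pi.sub_apply, Pi.single_eq_of_ne hne, Pi.single_eq_same]
        omega
      simp only [beta] at h1 h2
      omega
    · have := hP (j + 1) (by omega)
      simp only [beta] at hbi
      omega
  have hpos : ∀ r : ℕ, r ≤ j → 1 ≤ P.parts r := by
    intro r hr
    have := P.antitone hr
    omega
  have hanti : ∀ r, P.parts (r + 1) ≤ P.parts r := fun r => P.antitone (Nat.le_succ r)
  refine ⟨⟨fun r => if r < i ∨ (j : ℕ) < r then P.parts r else if r < j then P.parts (r + 1) - 1
      else P.parts i + j - i - t, ?_, k, ?_⟩, j, ?_⟩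
  · have : Antitone (fun r : ℕ => if r < i ∨ (j : ℕ) < r then P.parts r else
        if r < j then P.parts (r + 1) - 1 else P.parts i + j - i - t) := by
      refine antitone_nat_of_succ_le fun r => ?_
      have h1 := hanti r
      have h2 := hanti (r + 1)
      by_cases hr : r = j
      · subst hr
        split_ifs <;> omega
      by_cases hr' : r + 1 = j
      · have : P.parts (r + 1) = P.parts j := by rw [hr']
        by_cases hri : r + 1 = i
        · have : P.parts (r + 1) = P.parts i := by rw [hri]
          split_ifs <;> omega
        split_ifs <;> omega
      split_ifs <;> omega
    exact this
  · intro r hr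
    have := hP r hr
    split_ifs <;> omega
  · refine ⟨hij', ?_, ?_, ?_, ?_, ?_⟩
    · intro r hr; simp [hr]
    · intro r hr; simp [hr]
    · intro r h1 h2
      have := hpos (r + 1) (by omega)
      simp only
      rw [if_neg (by omega), if_pos h2]
      omega
    · simp only
      rw [if_neg (by omega), if_neg (by omega)]
      omega
    · simp only
      rw [if_neg (by omega), if_neg (by omega)]
      omega

/-! ### The Murnaghan-Nakayama sum -/

def Ch (n : ℕ) (μ : Fin n → ℕ) (P : Partition) : Type :=
  {c : Fin (n + 1) → Partition // c 0 = Partition.empty ∧ c (Fin.last n) = P ∧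
    ∀ j : Fin n, IsStep (c j.succ) (c j.castSucc) (μ j)}

noncomputable def Ch.ht {n : ℕ} {μ : Fin n → ℕ} {P : Partition} (c : Ch n μ P) : ℕ :=
  ∑ j : Fin n, (rowCount ((c.1 j.succ).skew (c.1 j.castSucc)) - 1)

def Ch.snoc {n : ℕ} {μ : Fin (n + 1) → ℕ} {P : Partition}
    (x : Σ Q : {Q // IsStep P Q (μ (Fin.last n))}, Ch n (fun j => μ j.castSucc) Q.1) :
    Ch (n + 1) μ P :=
  ⟨Fin.snoc (α := fun _ => Partition) x.2.1 P, by
    obtain ⟨⟨Q, hQ⟩, c, h0, h1, h2⟩ := x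
    refine ⟨?_, by simp, ?_⟩
    · exact (Fin.snoc_castSucc (α := fun _ => Partition) P c 0).trans h0
    · intro j
      refine Fin.lastCases ?_ (fun j => ?_) j
      · rw [Fin.succ_last, Fin.snoc_last, Fin.snoc_castSucc]
        simp only at h1 ⊢
        rw [h1]
        exact hQ
      · rw [Fin.succ_castSucc, Fin.snoc_castSucc, Fin.snoc_castSucc]
        exact h2 j⟩

lemma Ch.snoc_bij {n : ℕ} {μ : Fin (n + 1) → ℕ} {P : Partition} :
    Function.Bijective (Ch.snoc (n := n) (μ := μ) (P := P)) := by
  constructor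
  · rintro ⟨⟨Q, hQ⟩, c, h0, h1, h2⟩ ⟨⟨Q', hQ'⟩, c', h0', h1', h2'⟩ h
    have hc : c = c' := by
      have := congrArg Subtype.val h
      simp only [Ch.snoc] at this
      exact (Fin.snoc_inj.1 this).1
    subst hc
    simp only at h1 h1'
    have : Q = Q' := h1.symm.trans h1'
    subst this
    rfl
  · rintro ⟨c, h0, h1, h2⟩
    refine ⟨⟨⟨c (Fin.last n).castSucc, ?_⟩, fun j => c j.castSucc, ?_, rfl, ?_⟩, ?_⟩
    · have := h2 (Fin.last n)
      rw [Fin.succ_last, h1] at this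
      exact this
    · exact h0
    · intro j
      have := h2 j.castSucc
      rw [Fin.succ_castSucc] at this
      exact this
    · apply Subtype.ext
      simp only [Ch.snoc]
      funext j
      refine Fin.lastCases ?_ (fun j => ?_) j
      · rw [Fin.snoc_last, h1]
      · rw [Fin.snoc_castSucc]

lemma Ch.ht_snoc {n : ℕ} {μ : Fin (n + 1) → ℕ} {P : Partition}
    (x : Σ Q : {Q // IsStep P Q (μ (Fin.last n))}, Ch n (fun j => μ j.castSucc) Q.1) :
    (Ch.snoc x).ht = (rowCount (P.skew x.1.1) - 1) + x.2.ht := by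
  obtain ⟨⟨Q, hQ⟩, c, h0, h1, h2⟩ := x
  unfold Ch.ht Ch.snoc
  rw [Fin.sum_univ_castSucc, add_comm]
  simp only at h1
  congr 1
  · simp only [Fin.succ_last, Fin.snoc_last, Fin.snoc_castSucc, h1]
  · refine Finset.sum_congr rfl fun j _ => ?_
    simp only [Fin.succ_castSucc, Fin.snoc_castSucc]

lemma delta_eq_beta (k : ℕ) : delta k = beta k Partition.empty := by
  funext i
  simp [delta, beta, Partition.empty]

lemma altA_beta {k : ℕ} {P : Partition} (hP : ∀ i, k ≤ i → P.parts i = 0) [Decidable (P = Partition.empty)] :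
    altA k (beta k P) = if P = Partition.empty then 1 else 0 := by
  classical
  have key : ∀ σ : Equiv.Perm (Fin k), beta k P = delta k ∘ σ → P = Partition.empty ∧ σ = 1 := by
    intro σ h
    have h1 : beta k P = delta k := by
      rw [delta_eq_beta]
      refine ((beta_strictAnti k P).range_inj (beta_strictAnti k _)).1 ?_
      rw [h, σ.surjective.range_comp, delta_eq_beta]
    refine ⟨beta_inj hP (fun _ _ => rfl) (h1.trans (delta_eq_beta k)), ?_⟩
    ext i
    have h2 : delta k (σ i) = delta k i := by
      exact congrFun (h.symm.trans h1) i
    rw [delta_eq_beta] at h2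
    have := (beta_strictAnti k _).injective h2
    simp [this]
  unfold altA
  rw [Finset.sum_eq_single 1]
  · split_ifs with h1 h2 h2
    · simp
    · exact absurd (key 1 h1).1 h2
    · exfalso
      apply h1
      rw [h2, delta_eq_beta]
      rfl
    · simp
  · intro σ _ hσ
    rw [if_neg (fun h => hσ (key σ h).2), mul_zero]
  · simp

lemma step_sum {k : ℕ} {P : Partition} {t : ℕ} (ht : 0 < t) (m : Multiset ℕ)
    (hP : ∀ i, k ≤ i → P.parts i = 0) :
    Finite {Q // IsStep P Q t} ∧ ∀ [Fintype {Q // IsStep P Q t}],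
      ∑ Q : {Q // IsStep P Q t}, (-1 : ℚ) ^ (rowCount (P.skew Q.1) - 1) * Fm k m (beta k Q.1) =
        opT t (Fm k m) (beta k P) := by
  classical
  have hrim : ∀ Q : {Q // IsStep P Q t}, ∃ i j : Fin k, HookData P Q.1 i j t := by
    rintro ⟨Q, hQ⟩
    rcases hQ with ⟨h, _⟩ | ⟨_, h⟩
    · omega
    · exact hook_of_rim hP h
  choose e f hef using hrim
  have hinj : Function.Injective e := by
    intro Q Q' h
    have h1 := hef Q
    rw [h] at h1
    exact Subtype.ext (hook_unique hP h1 (hef Q'))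
  refine ⟨Finite.of_injective e hinj, ?_⟩
  intro _
  unfold opT
  refine Fintype.sum_of_injective e hinj _ _ ?_ ?_
  · intro i hi
    by_contra hne
    apply hi
    have hin : Function.Injective (beta k P - Pi.single i (t : ℤ)) := by
      by_contra h
      exact hne (Fm_not_inj k m _ h)
    have hnn : ∀ r, 0 ≤ (beta k P - Pi.single i (t : ℤ) : Fin k → ℤ) r := by
      intro r
      by_contra h
      exact hne (Fm_neg k m _ r (not_le.1 h))
    obtain ⟨Q, j, hQ⟩ := hook_exists ht hP hin hnn
    refine ⟨⟨Q, Or.inr ⟨ht, rim_of_hook hP hQ⟩⟩, ?_⟩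
    have h1 := hef ⟨Q, Or.inr ⟨ht, rim_of_hook hP hQ⟩⟩
    -- top rows agree
    have a := (hQ.lt' i).2 ⟨le_rfl, hQ.hij⟩
    have b := (h1.lt' _).2 ⟨le_rfl, h1.hij⟩
    have a' := (h1.lt' _).1 a
    have b' := (hQ.lt' _).1 b
    apply Fin.ext
    omega
  · intro Q
    have h := hef Q
    rw [h.rowCount, h.beta_eq, Fm_anti, Fin.sign_cycleIcc_of_le h.hij, ← mul_assoc]
    simp only [Units.val_pow_eq_pow_val, Units.val_neg, Units.val_one, Int.cast_pow, Int.cast_neg,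
      Int.cast_one]
    rw [← mul_pow]
    simp

lemma chain_sum {k : ℕ} : ∀ (n : ℕ) (μ : Fin n → ℕ) (_ : ∀ j, 0 < μ j) (P : Partition)
    (_ : ∀ i, k ≤ i → P.parts i = 0), Finite (Ch n μ P) ∧ ∀ [Fintype (Ch n μ P)],
      ∑ c : Ch n μ P, (-1 : ℚ) ^ c.ht = Fm k (List.ofFn μ : Multiset ℕ) (beta k P) := by
  classical
  intro n
  induction n with
  | zero =>
    intro μ _ P hP
    have hsub : Subsingleton (Ch 0 μ P) := ⟨by
      rintro ⟨c, h0, -⟩ ⟨c', h0', -⟩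
      apply Subtype.ext
      funext j
      have : j = 0 := Fin.ext (by simp)
      rw [this]
      exact h0.trans h0'.symm⟩
    refine ⟨Finite.of_subsingleton, ?_⟩
    intro _
    simp only [List.ofFn_zero, Multiset.coe_nil, Fm_zero, altA_beta hP]
    split_ifs with h
    · subst h
      have : Unique (Ch 0 μ Partition.empty) :=
        { default := ⟨fun _ => Partition.empty, rfl, rfl, fun j => j.elim0⟩
          uniq := fun a => Subsingleton.elim _ _ }
      rw [Fintype.sum_eq_single default (fun x hx => absurd (Subsingleton.elim _ _) hx)]
      simp [Ch.ht]
    · have : IsEmpty (Ch 0 μ P) := ⟨by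
        rintro ⟨c, h0, h1, -⟩
        exact h (h1.symm.trans h0)⟩
      simp
  | succ n ih =>
    intro μ hμ P hP
    have hQ : ∀ Q : {Q // IsStep P Q (μ (Fin.last n))}, ∀ i, k ≤ i → Q.1.parts i = 0 := by
      rintro ⟨Q, hQ⟩ i hi
      rcases hQ with ⟨_, rfl⟩ | ⟨_, h⟩
      · exact hP i hi
      · have h1 : Q.parts i ≤ P.parts i := h.1 i
        have := hP i hi
        simp only
        omega
    obtain ⟨hfin, hs⟩ := step_sum (hμ (Fin.last n)) (List.ofFn fun j => μ j.castSucc : Multiset ℕ) hP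
    have := Fintype.ofFinite {Q // IsStep P Q (μ (Fin.last n))}
    have hf : ∀ Q : {Q // IsStep P Q (μ (Fin.last n))},
        Finite (Ch n (fun j => μ j.castSucc) Q.1) := fun Q =>
      (ih (fun j => μ j.castSucc) (fun j => hμ _) Q.1 (hQ Q)).1
    have := fun Q : {Q // IsStep P Q (μ (Fin.last n))} =>
      Fintype.ofFinite (Ch n (fun j => μ j.castSucc) Q.1)
    refine ⟨Finite.of_surjective _ Ch.snoc_bij.2, ?_⟩
    intro _
    have hm : (List.ofFn μ : Multiset ℕ) =
        μ (Fin.last n) ::ₘ (List.ofFn fun j => μ j.castSucc : Multiset ℕ) := by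
      rw [List.ofFn_succ', List.concat_eq_append, ← Multiset.coe_add, add_comm]
      rfl
    rw [hm, Fm_cons, ← hs, ← Fintype.sum_bijective Ch.snoc Ch.snoc_bij
      (fun x => (-1 : ℚ) ^ (Ch.snoc x).ht) _ (fun _ => rfl), Fintype.sum_sigma]
    refine Finset.sum_congr rfl fun Q _ => ?_
    rw [← (ih (fun j => μ j.castSucc) (fun j => hμ _) Q.1 (hQ Q)).2, Finset.mul_sum]
    refine Finset.sum_congr rfl fun c _ => ?_
    rw [Ch.ht_snoc, pow_add]

def rhtEquiv (P : Partition) (l : List ℕ) : RHT P l ≃ Ch l.length l.get P where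
  toFun T := ⟨T.chain, T.chain_zero, T.chain_last, T.step⟩
  invFun c := ⟨c.1, c.2.1, c.2.2.1, c.2.2.2⟩
  left_inv _ := rfl
  right_inv _ := rfl

lemma chi_eq {k : ℕ} {P : Partition} (hP : ∀ i, k ≤ i → P.parts i = 0) (m : Multiset ℕ)
    (hm : ∀ x ∈ m, 0 < x) : (chi P m : ℚ) = Fm k m (beta k P) := by
  have hl : (typeList m : Multiset ℕ) = m := by
    unfold typeList
    rw [Multiset.coe_reverse, Multiset.sort_eq]
  have hmem : ∀ x ∈ typeList m, x ∈ m := by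
    intro x hx
    rw [← Multiset.mem_coe, hl] at hx
    exact hx
  obtain ⟨hfin, hs⟩ := chain_sum (k := k) (typeList m).length (typeList m).get
    (fun j => hm _ (hmem _ (List.get_mem _ _))) P hP
  have := Fintype.ofFinite (Ch (typeList m).length (typeList m).get P)
  have hs' := hs
  rw [List.ofFn_get, hl] at hs'
  rw [← hs']
  unfold chi chiAux
  have e : ∑ᶠ T : RHT P (typeList m), (-1 : ℤ) ^ T.height =
      ∑ᶠ c : Ch (typeList m).length (typeList m).get P, (-1 : ℤ) ^ c.ht :=
    finsum_eq_of_bijective (rhtEquiv P (typeList m)) (rhtEquiv P (typeList m)).bijective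
      (fun T => rfl)
  rw [e, finsum_eq_sum_of_fintype]
  push_cast
  rfl

/-! ### Conclusion -/

lemma delta_dvd_inj {k : ℕ} {i j : Fin k} (h : (k : ℤ) ∣ delta k i - delta k j) : i = j := by
  obtain ⟨c, hc⟩ := h
  have h1 := delta_bd i
  have h2 := delta_bd j
  have hc0 : c = 0 := by
    by_contra hne
    rcases lt_or_gt_of_ne hne with h | h
    · have : c ≤ -1 := by omega
      nlinarith
    · have : 1 ≤ c := by omega
      nlinarith
  rw [hc0] at hc
  simp only [delta] at hc
  apply Fin.ext
  omega

lemma Gp_of_cond {k p : ℕ} {b : Fin k → ℤ} {σ : Equiv.Perm (Fin k)} (h : Gcond k p b σ) :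
    Gp k p b = ((Equiv.Perm.sign σ : ℤ) : ℚ) := by
  classical
  unfold Gp
  rw [Finset.sum_eq_single σ]
  · rw [if_pos h, mul_one]
  · intro σ' _ hne
    rw [if_neg, mul_zero]
    intro h'
    apply hne
    ext i
    have h1 := dvd_sub (h.2.2 i) (h'.2.2 i)
    rw [show b i - delta k (σ i) - (b i - delta k (σ' i)) = delta k (σ' i) - delta k (σ i) by
      ring] at h1
    rw [delta_dvd_inj h1]
  · simp

lemma Gp_of_not {k p : ℕ} {b : Fin k → ℤ} (h : ∀ σ, ¬ Gcond k p b σ) : Gp k p b = 0 := by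
  classical
  unfold Gp
  refine Finset.sum_eq_zero fun σ _ => ?_
  rw [if_neg (h σ), mul_zero]

lemma coef_eq {k p : ℕ} (hk : 0 < k) {P : Partition} (hP : ∀ i, k ≤ i → P.parts i = 0) :
    ∑ μ : Nat.Partition p, (1 / (zpart μ.parts : ℚ)) *
      (chi P (μ.parts.map fun x => k * x) : ℚ) = Gp k p (beta k P) := by
  rw [← Z_eq k hk, ← sum_parF]
  refine Finset.sum_congr rfl fun μ _ => ?_
  rw [chi_eq hP]
  intro x hx
  rw [Multiset.mem_map] at hx
  obtain ⟨y, hy, rfl⟩ := hx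
  exact Nat.mul_pos hk (μ.parts_pos hy)

lemma beta_sum {k p : ℕ} {P : Partition} (hP : ∀ i, k ≤ i → P.parts i = 0)
    (hs : P.size = k * p) : ∑ i, beta k P i = k * p + ∑ i, delta k i := by
  have h1 : P.size = ∑ i : Fin k, P.parts i := by
    unfold Partition.size
    rw [finsum_eq_sum_of_support_subset (s := Finset.range k), Finset.sum_range]
    intro i hi
    rw [Function.mem_support] at hi
    simp only [Finset.coe_range, Set.mem_Iio]
    by_contra h
    exact hi (hP i (by omega))
  have h2 : (k * p : ℤ) = ∑ i : Fin k, (P.parts i : ℤ) := by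
    rw [hs] at h1
    exact_mod_cast h1
  rw [h2, ← Finset.sum_add_distrib]
  refine Finset.sum_congr rfl fun i _ => ?_
  simp only [beta, delta]
  ring

lemma cond_iff {k p : ℕ} {P : Partition} (hP : ∀ i, k ≤ i → P.parts i = 0)
    (hs : P.size = k * p) (σ : Equiv.Perm (Fin k)) :
    Gcond k p (beta k P) σ ↔ ∀ i, (k : ℤ) ∣ beta k P i - delta k (σ i) := by
  refine ⟨fun h => h.2.2, fun h => ⟨fun i => ?_, beta_sum hP hs, h⟩⟩
  have := i.2
  simp only [beta]
  omega

lemma rot_pow (n p : ℕ) (i : Fin (n + 1)) :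
    ((n + 1 : ℕ) : ℤ) ∣ ((((finRotate (n + 1)) ^ p) i : ℕ) : ℤ) - ((i : ℕ) : ℤ) - p := by
  induction p with
  | zero => simp
  | succ p ih =>
    rw [pow_succ', Equiv.Perm.mul_apply, finRotate_apply]
    set x := ((finRotate (n + 1)) ^ p) i
    have hx : ((n + 1 : ℕ) : ℤ) ∣ (((x + 1 : Fin (n + 1)) : ℕ) : ℤ) - (x : ℕ) - 1 := by
      rcases eq_or_ne x (Fin.last n) with h | h
      · rw [h]
        simp only [Fin.last_add_one, Fin.val_zero, Fin.val_last]
        exact ⟨-1, by push_cast; ring⟩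
      · rw [Fin.val_add_one_of_lt (lt_of_le_of_ne (Fin.le_last x) h)]
        simp
    have := dvd_add hx ih
    obtain ⟨c, hc⟩ := this
    exact ⟨c, by rw [← hc]; push_cast; ring⟩

/-- elementary form of the main theorem, computing Kostant's
coefficient for `SU(k)`: for `λ` with at most `k` parts and `|λ| = kp`, the
quantity `(−1)^{(k−1)p} Σ_{μ ⊢ p} (1/z_μ)·χ^λ_{kμ}` equals `0` if the numbers
`λᵢ + k − i` (`1 ≤ i ≤ k`) do not have `k` distinct residues mod `k`, and
otherwise equals the sign of the (unique) `τ ∈ S_k` with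
`λ_{τ(i)} − p + k − τ(i) ≡ k − i (mod k)` for all `i`; in particular it always
lies in `{0, 1, −1}`. (Parts are 0-indexed: `λᵢ = P.parts (i−1)`.) -/
theorem kostant_coefficient_for_SU_k (k p : ℕ) (hk : 2 ≤ k) (P : Partition)
    (hparts : ∀ i : ℕ, k ≤ i → P.parts i = 0) (hP : P.size = k * p) :
    ((¬ Function.Injective fun i : Fin k =>
        (((P.parts (i : ℕ) : ℤ) + (k : ℤ) - 1 - ((i : ℕ) : ℤ) : ℤ) : ZMod k)) →
      (-1 : ℚ) ^ ((k - 1) * p) *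
        ∑ μ : Nat.Partition p, (1 / (zpart μ.parts : ℚ)) *
          (chi P (μ.parts.map fun x => k * x) : ℚ) = 0) ∧
    (∀ τ : Equiv.Perm (Fin k),
      (∀ i : Fin k,
        (((P.parts ((τ i : ℕ)) : ℤ) - (p : ℤ) + (k : ℤ) - 1 - ((τ i : ℕ) : ℤ) : ℤ) :
            ZMod k) =
          (((k : ℤ) - 1 - ((i : ℕ) : ℤ) : ℤ) : ZMod k)) →
      (-1 : ℚ) ^ ((k - 1) * p) *
        ∑ μ : Nat.Partition p, (1 / (zpart μ.parts : ℚ)) *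
          (chi P (μ.parts.map fun x => k * x) : ℚ) =
        ((Equiv.Perm.sign τ : ℤ) : ℚ)) ∧
    ((-1 : ℚ) ^ ((k - 1) * p) *
        ∑ μ : Nat.Partition p, (1 / (zpart μ.parts : ℚ)) *
          (chi P (μ.parts.map fun x => k * x) : ℚ) = 0 ∨
      (-1 : ℚ) ^ ((k - 1) * p) *
        ∑ μ : Nat.Partition p, (1 / (zpart μ.parts : ℚ)) *
          (chi P (μ.parts.map fun x => k * x) : ℚ) = 1 ∨
      (-1 : ℚ) ^ ((k - 1) * p) *
        ∑ μ : Nat.Partition p, (1 / (zpart μ.parts : ℚ)) *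
          (chi P (μ.parts.map fun x => k * x) : ℚ) = -1) := by
  have hk0 : 0 < k := by omega
  rw [coef_eq hk0 hparts]
  have hpm : ∀ N : ℕ, (-1 : ℚ) ^ N = 1 ∨ (-1 : ℚ) ^ N = -1 := fun N => neg_one_pow_eq_or ℚ N
  refine ⟨?_, ?_, ?_⟩
  · intro hninj
    rw [Gp_of_not, mul_zero]
    intro σ hσ
    rw [cond_iff hparts hP] at hσ
    apply hninj
    intro i j hij
    have h1 : (k : ℤ) ∣ beta k P i - beta k P j := by
      have := (ZMod.intCast_eq_intCast_iff_dvd_sub _ _ k).1 hij.symm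
      exact this
    have h2 : (k : ℤ) ∣ delta k (σ i) - delta k (σ j) := by
      have := dvd_add (dvd_sub h1 (hσ i)) (hσ j)
      obtain ⟨c, hc⟩ := this
      exact ⟨c, by rw [← hc]; ring⟩
    exact σ.injective (delta_dvd_inj h2)
  · intro τ hτ
    obtain ⟨n, rfl⟩ : ∃ n, k = n + 1 := ⟨k - 1, by omega⟩
    have hc : Gcond (n + 1) p (beta (n + 1) P) (((finRotate (n + 1)) ^ p)⁻¹ * τ⁻¹) := by
      rw [cond_iff hparts hP]
      intro i
      obtain ⟨j, rfl⟩ := τ.surjective i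
      obtain ⟨l, rfl⟩ := ((finRotate (n + 1)) ^ p).surjective j
      have hl : (((finRotate (n + 1)) ^ p)⁻¹ * τ⁻¹) (τ (((finRotate (n + 1)) ^ p) l)) = l := by
        rw [← Equiv.Perm.mul_apply, ← Equiv.Perm.mul_apply]
        have : ((finRotate (n + 1)) ^ p)⁻¹ * τ⁻¹ * τ * (finRotate (n + 1)) ^ p = 1 := by group
        rw [this]
        rfl
      rw [hl]
      have h1 := (ZMod.intCast_eq_intCast_iff_dvd_sub _ _ (n + 1)).1
        (hτ (((finRotate (n + 1)) ^ p) l)).symm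
      have h2 := rot_pow n p l
      have := dvd_sub h1 h2
      obtain ⟨c, hc⟩ := this
      refine ⟨c, ?_⟩
      rw [← hc]
      simp only [beta, delta]
      ring
    rw [Gp_of_cond hc, Equiv.Perm.sign_mul, Equiv.Perm.sign_inv, Equiv.Perm.sign_inv, map_pow,
      sign_finRotate, ← pow_mul]
    simp only [Units.val_mul, Units.val_pow_eq_pow_val, Units.val_neg, Units.val_one,
      Int.cast_mul, Int.cast_pow, Int.cast_neg, Int.cast_one]
    rw [← mul_assoc, ← mul_pow]
    simp
  · by_cases h : ∃ σ, Gcond k p (beta k P) σ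
    · obtain ⟨σ, hσ⟩ := h
      rw [Gp_of_cond hσ]
      right
      rcases hpm ((k - 1) * p) with h1 | h1 <;>
        rcases Int.units_eq_one_or (Equiv.Perm.sign σ) with h2 | h2 <;> simp [h1, h2]
    · rw [Gp_of_not (fun σ hσ => h ⟨σ, hσ⟩)]
      left
      simp

end RimHookPaper
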